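/- arXiv:1411.3672 — 3 statements merged into one kernel-verified Lean document; each statement's English description precedes it below -/
import Mathlib

section
/- For every positive integer k and every real λ with 0 < λ < 1, the series ∑_{n=0}^∞ (1+2n)²/((4k² − (1+2n)²)·((1+2n)² − λ²)²) converges and equals ((π²·λ/2)·(4k² − λ²)·sec²(πλ/2) + π·(4k² + λ²)·tan(πλ/2)) / (8·λ·(λ² − 4k²)²). -/
open Real

lemma aux_cot (x : ℝ) (hx0 : 0 < x) (hx1 : x < 1) :
    HasSum (fun n : ℕ => 2 * x / (x ^ 2 - (n : ℝ) ^ 2))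
      (π * (Real.cos (π * x) / Real.sin (π * x)) + 1 / x) := by
  have hz : (x : ℂ) ∈ Complex.integerComplement := by
    rw [Complex.mem_integerComplement_iff]
    rintro ⟨n, hn⟩
    have h : (n : ℝ) = x := by exact_mod_cast hn
    have h1 : (0 : ℝ) < n := by rw [h]; exact hx0
    have h2 : (n : ℝ) < 1 := by rw [h]; exact hx1
    have h3 : 0 < n := by exact_mod_cast h1
    have h4 : n < 1 := by exact_mod_cast h2
    omega
  have h := (summable_cotTerm hz).hasSum
  have e := cot_series_rep' hz
  rw [show (∑' n : ℕ, cotTerm (x : ℂ) n) = _ from e.symm] at h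
  have h' : HasSum (fun n : ℕ => 2 * x / (x ^ 2 - ((n + 1 : ℕ) : ℝ) ^ 2))
      (π * (Real.cos (π * x) / Real.sin (π * x)) - 1 / x) := by
    rw [← Complex.hasSum_ofReal]
    convert! h using 1
    · funext n
      have h1 : x - (n + 1) ≠ 0 := by
        have : (0 : ℝ) ≤ n := n.cast_nonneg
        linarith
      have h2 : x + (n + 1) ≠ 0 := by positivity
      have : 2 * x / (x ^ 2 - ((n + 1 : ℕ) : ℝ) ^ 2) = 1 / (x - (n + 1)) + 1 / (x + (n + 1)) := by
        have h3 : x ^ 2 - ((n + 1 : ℕ) : ℝ) ^ 2 = (x - (n + 1)) * (x + (n + 1)) := by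
          push_cast; ring
        rw [h3]; field_simp; ring
      rw [this]; simp [cotTerm]
    · simp [Complex.cot]
  rw [← hasSum_nat_add_iff' 1]
  convert! h' using 1
  simp
  field_simp
  ring

lemma aux_tan (x : ℝ) (hx0 : 0 < x) (hx1 : x < 1) :
    HasSum (fun n : ℕ => 1 / ((1 + 2 * (n : ℝ)) ^ 2 - x ^ 2))
      (π * Real.tan (π * x / 2) / (4 * x)) := by
  have hall := (aux_cot x hx0 hx1)
  have hev := (aux_cot (x / 2) (by linarith) (by linarith))
  have hev2 : HasSum (fun n : ℕ => 2 * x / (x ^ 2 - ((2 * n : ℕ) : ℝ) ^ 2))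
      ((1 / 2) * (π * (Real.cos (π * (x / 2)) / Real.sin (π * (x / 2))) + 1 / (x / 2))) := by
    convert! hev.mul_left (1 / 2) using 1
    funext n
    have : x ^ 2 - ((2 * n : ℕ) : ℝ) ^ 2 = 4 * ((x / 2) ^ 2 - (n : ℝ) ^ 2) := by push_cast; ring
    rw [this, mul_comm 4, ← div_div]; ring
  have hodd : Summable (fun n : ℕ => 2 * x / (x ^ 2 - ((2 * n + 1 : ℕ) : ℝ) ^ 2)) :=
    hall.summable.comp_injective (i := fun n : ℕ => 2 * n + 1) (fun a b h => by simpa using h)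
  have hsum := hev2.even_add_odd (f := fun n : ℕ => 2 * x / (x ^ 2 - (n : ℝ) ^ 2)) hodd.hasSum
  have key := hsum.unique hall
  have h := hodd.hasSum.mul_left (-1 / (2 * x))
  convert! h using 1
  · funext n
    rw [show x ^ 2 - ((2 * n + 1 : ℕ) : ℝ) ^ 2 = -((1 + 2 * (n : ℝ)) ^ 2 - x ^ 2) by
      push_cast; ring]
    have : (1 + 2 * (n : ℝ)) ^ 2 - x ^ 2 ≠ 0 := by
      have : (0 : ℝ) ≤ n := n.cast_nonneg
      nlinarith
    field_simp
  · rw [← eq_sub_iff_add_eq'] at key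
    rw [key]
    have hp := Real.pi_pos
    have hs : 0 < Real.sin (π * (x / 2)) :=
      Real.sin_pos_of_pos_of_lt_pi (by positivity) (by nlinarith)
    have hc : 0 < Real.cos (π * (x / 2)) :=
      Real.cos_pos_of_mem_Ioo ⟨by nlinarith, by nlinarith⟩
    rw [show π * x = 2 * (π * (x / 2)) by ring, Real.sin_two_mul, Real.cos_two_mul,
      show 2 * (π * (x / 2)) / 2 = π * (x / 2) by ring, Real.tan_eq_sin_div_cos]
    have hsc := Real.sin_sq_add_cos_sq (π * (x / 2))
    generalize Real.sin (π * (x / 2)) = s at *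
    generalize Real.cos (π * (x / 2)) = c at *
    field_simp
    linear_combination (4 : ℝ) * π * x * hsc

lemma aux_sq (l : ℝ) (hl0 : 0 < l) (hl1 : l < 1) :
    HasSum (fun n : ℕ => 1 / ((1 + 2 * (n : ℝ)) ^ 2 - l ^ 2) ^ 2)
      (π / (8 * l) * (π / 2 * (1 / Real.cos (π * l / 2)) ^ 2 / l
        - Real.tan (π * l / 2) / l ^ 2)) := by
  set r := (1 + l) / 2 with hr
  have hr0 : 0 < r := by rw [hr]; linarith
  have hr1 : r < 1 := by rw [hr]; linarith
  have hlr : l < r := by rw [hr]; linarith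
  have hu : Summable (fun n : ℕ => 2 / (1 - r ^ 2) * (1 / ((1 + 2 * (n : ℝ)) ^ 2 - r ^ 2))) :=
    (aux_tan r hr0 hr1).summable.mul_left _
  have hr2 : 0 < 1 - r ^ 2 := by nlinarith
  have hbd : ∀ (n : ℕ) (y : ℝ), y ∈ Set.Ioo 0 r →
      ‖2 * y / ((1 + 2 * (n : ℝ)) ^ 2 - y ^ 2) ^ 2‖
        ≤ 2 / (1 - r ^ 2) * (1 / ((1 + 2 * (n : ℝ)) ^ 2 - r ^ 2)) := by
    intro n y hy
    obtain ⟨hy0, hy1⟩ := hy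
    have hn : (0 : ℝ) ≤ n := n.cast_nonneg
    have h1 : 1 - r ^ 2 ≤ (1 + 2 * (n : ℝ)) ^ 2 - y ^ 2 := by nlinarith
    have h2 : (1 + 2 * (n : ℝ)) ^ 2 - r ^ 2 ≤ (1 + 2 * (n : ℝ)) ^ 2 - y ^ 2 := by nlinarith
    have h3 : 0 < (1 + 2 * (n : ℝ)) ^ 2 - r ^ 2 := by nlinarith
    rw [Real.norm_of_nonneg (by positivity), div_mul_div_comm, mul_one]
    apply div_le_div₀ (by norm_num) (by linarith) (by positivity)
    rw [sq (_ - _)]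
    exact mul_le_mul h1 h2 h3.le (by linarith)
  have hlm : l ∈ Set.Ioo 0 r := ⟨hl0, hlr⟩
  have hd : HasDerivAt (fun z => ∑' n : ℕ, 1 / ((1 + 2 * (n : ℝ)) ^ 2 - z ^ 2))
      (∑' n : ℕ, 2 * l / ((1 + 2 * (n : ℝ)) ^ 2 - l ^ 2) ^ 2) l := by
    refine hasDerivAt_tsum_of_isPreconnected (t := Set.Ioo 0 r)
      (g := fun (n : ℕ) z => 1 / ((1 + 2 * (n : ℝ)) ^ 2 - z ^ 2))
      (g' := fun (n : ℕ) z => 2 * z / ((1 + 2 * (n : ℝ)) ^ 2 - z ^ 2) ^ 2)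
      hu isOpen_Ioo isPreconnected_Ioo ?_ hbd hlm (aux_tan l hl0 hl1).summable hlm
    intro n y hy
    obtain ⟨hy0, hy1⟩ := hy
    have hn : (0 : ℝ) ≤ n := n.cast_nonneg
    have h3 : (1 + 2 * (n : ℝ)) ^ 2 - y ^ 2 ≠ 0 := by nlinarith
    have := ((hasDerivAt_pow 2 y).const_sub ((1 + 2 * (n : ℝ)) ^ 2)).inv h3
    simp only [one_div]
    convert! this using 1
    simp
  have hc : 0 < Real.cos (π * l / 2) := by
    have hp := Real.pi_pos
    exact Real.cos_pos_of_mem_Ioo ⟨by nlinarith, by nlinarith⟩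
  have hd2 : HasDerivAt (fun z => ∑' n : ℕ, 1 / ((1 + 2 * (n : ℝ)) ^ 2 - z ^ 2))
      (((π * (1 / Real.cos (π * l / 2) ^ 2 * (π * 1 / 2))) * (4 * l)
        - π * Real.tan (π * l / 2) * (4 * 1)) / (4 * l) ^ 2) l := by
    have h0 : HasDerivAt (fun z : ℝ => π * z / 2) (π * 1 / 2) l :=
      ((hasDerivAt_id l).const_mul π).div_const 2
    have h1 := (Real.hasDerivAt_tan hc.ne').comp l h0
    have h2 := (h1.const_mul π).div ((hasDerivAt_id l).const_mul 4) (by simp; exact hl0.ne')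
    refine HasDerivAt.congr_of_eventuallyEq h2 ?_
    filter_upwards [isOpen_Ioo.mem_nhds hlm] with z hz
    exact (aux_tan z hz.1 (hz.2.trans hr1)).tsum_eq
  have key := hd.unique hd2
  have hs : Summable (fun n : ℕ => 2 * l / ((1 + 2 * (n : ℝ)) ^ 2 - l ^ 2) ^ 2) :=
    Summable.of_norm_bounded hu (fun n => hbd n l hlm)
  have h := hs.hasSum.mul_left (1 / (2 * l))
  rw [key] at h
  convert! h using 1
  · funext n; field_simp
  · field_simp
    ring

lemma aux_tele (k : ℕ) : Filter.Tendsto (fun N : ℕ => ∑ n ∈ Finset.range N,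
    (1 / ((1 + 2 * (n : ℝ)) - 2 * k) - 1 / ((1 + 2 * (n : ℝ)) + 2 * k)))
    Filter.atTop (nhds 0) := by
  induction k with
  | zero => simp
  | succ k ih =>
    have hg : ∀ c : ℝ, Filter.Tendsto (fun N : ℕ => 1 / (2 * (N : ℝ) + c)) Filter.atTop (nhds 0) := by
      intro c
      simp only [one_div]
      apply Filter.Tendsto.inv_tendsto_atTop
      apply Filter.tendsto_atTop_add_const_right
      exact (tendsto_natCast_atTop_atTop).const_mul_atTop (by norm_num)
    have := (ih.sub (hg (-(2 * k + 1)))).sub (hg (2 * k + 1))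
    simp only [sub_zero] at this
    refine this.congr ?_
    intro N
    induction N with
    | zero =>
      simp only [Finset.range_zero, Finset.sum_empty, Nat.cast_zero, mul_zero, zero_add, one_div,
        inv_neg]
      ring
    | succ N ihN =>
      rw [Finset.sum_range_succ, Finset.sum_range_succ, ← ihN]
      push_cast
      rw [show (2 * ((N : ℝ) + 1) + -(2 * k + 1)) = 1 + 2 * N - 2 * k by ring,
        show (2 * ((N : ℝ) + 1) + (2 * k + 1)) = 1 + 2 * N + 2 * (k + 1) by ring,
        show (2 * (N : ℝ) + -(2 * k + 1)) = 1 + 2 * N - 2 * (k + 1) by ring,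
        show (2 * (N : ℝ) + (2 * k + 1)) = 1 + 2 * N + 2 * k by ring]
      ring

lemma aux_ne (k n : ℕ) : 4 * (k : ℝ) ^ 2 - (1 + 2 * (n : ℝ)) ^ 2 ≠ 0 := by
  intro h
  have h1 : (4 * (k : ℤ) ^ 2 - (1 + 2 * (n : ℤ)) ^ 2) = 0 := by exact_mod_cast h
  have : 2 * (2 * (k : ℤ) ^ 2 - 2 * n - 2 * n ^ 2) = 1 := by linarith
  omega

lemma aux_zero (k : ℕ) (hk : 0 < k) :
    HasSum (fun n : ℕ => 1 / ((1 + 2 * (n : ℝ)) ^ 2 - 4 * (k : ℝ) ^ 2)) 0 := by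
  have hk' : (0 : ℝ) < k := by exact_mod_cast hk
  have hs : Summable (fun n : ℕ => 1 / ((1 + 2 * (n : ℝ)) ^ 2 - 4 * (k : ℝ) ^ 2)) := by
    refine Summable.of_norm_bounded_eventually_nat
      ((aux_tan (1 / 2) (by norm_num) (by norm_num)).summable.mul_left 2) ?_
    filter_upwards [Filter.eventually_ge_atTop (2 * k)] with n hn
    have hn' : 2 * (k : ℝ) ≤ n := by exact_mod_cast hn
    have h1 : 0 < (1 + 2 * (n : ℝ)) ^ 2 - 4 * (k : ℝ) ^ 2 := by nlinarith
    have h2 : 0 < (1 + 2 * (n : ℝ)) ^ 2 - (1 / 2) ^ 2 := by nlinarith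
    rw [Real.norm_of_nonneg (by positivity), mul_one_div, div_le_div_iff₀ h1 h2]
    nlinarith
  rw [hs.hasSum_iff_tendsto_nat]
  have := (aux_tele k).const_mul (1 / (4 * (k : ℝ)))
  rw [mul_zero] at this
  refine this.congr fun N => ?_
  rw [Finset.mul_sum]
  refine Finset.sum_congr rfl fun n _ => ?_
  have h := aux_ne k n
  have h0 : (1 + 2 * (n : ℝ)) ^ 2 - 4 * (k : ℝ) ^ 2
      = ((1 + 2 * (n : ℝ)) - 2 * k) * ((1 + 2 * (n : ℝ)) + 2 * k) := by ring
  have h1 : (1 + 2 * (n : ℝ)) - 2 * k ≠ 0 := by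
    intro h2; apply h; linear_combination (-(1 + 2 * (n : ℝ)) - 2 * k) * h2
  have h2 : (1 + 2 * (n : ℝ)) + 2 * k ≠ 0 := by positivity
  rw [h0, div_sub_div _ _ h1 h2,
    show 1 * (1 + 2 * (n : ℝ) + 2 * k) - (1 + 2 * (n : ℝ) - 2 * k) * 1 = 4 * k by ring]
  have h3 := mul_ne_zero h1 h2
  generalize (1 + 2 * (n : ℝ) - 2 * k) * (1 + 2 * (n : ℝ) + 2 * k) = p at *
  field_simp



/-- For every positive integer `k` and real `λ ∈ (0,1)`, the series
`∑_{n=0}^∞ (1+2n)²/((4k² − (1+2n)²)·((1+2n)² − λ²)²)` converges and equals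
`((π²·λ/2)·(4k² − λ²)·sec²(πλ/2) + π·(4k² + λ²)·tan(πλ/2)) / (8·λ·(λ² − 4k²)²)`. -/
theorem stmt_7 (k : ℕ) (hk : 0 < k) (l : ℝ) (hl0 : 0 < l) (hl1 : l < 1) :
    HasSum
      (fun n : ℕ =>
        (1 + 2 * (n : ℝ)) ^ 2 /
          ((4 * (k : ℝ) ^ 2 - (1 + 2 * (n : ℝ)) ^ 2) *
            ((1 + 2 * (n : ℝ)) ^ 2 - l ^ 2) ^ 2))
      ((π ^ 2 * l / 2 * (4 * (k : ℝ) ^ 2 - l ^ 2) * (1 / Real.cos (π * l / 2)) ^ 2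
          + π * (4 * (k : ℝ) ^ 2 + l ^ 2) * Real.tan (π * l / 2)) /
        (8 * l * (l ^ 2 - 4 * (k : ℝ) ^ 2) ^ 2)) := by
  have hk' : (1 : ℝ) ≤ k := by exact_mod_cast hk
  have hK : 4 * (k : ℝ) ^ 2 - l ^ 2 ≠ 0 := by nlinarith
  have hK2 : l ^ 2 - 4 * (k : ℝ) ^ 2 ≠ 0 := by nlinarith
  have h := (((aux_tan l hl0 hl1).sub (aux_zero k hk)).mul_left
    (4 * (k : ℝ) ^ 2 / (4 * (k : ℝ) ^ 2 - l ^ 2) ^ 2)).add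
    ((aux_sq l hl0 hl1).mul_left (l ^ 2 / (4 * (k : ℝ) ^ 2 - l ^ 2)))
  convert! h using 1
  · funext n
    have hn : (0 : ℝ) ≤ n := n.cast_nonneg
    have h1 := aux_ne k n
    have h2 : (1 + 2 * (n : ℝ)) ^ 2 - l ^ 2 ≠ 0 := by nlinarith
    have h3 : (1 + 2 * (n : ℝ)) ^ 2 - 4 * (k : ℝ) ^ 2 ≠ 0 := by
      intro h3; apply h1; linarith
    rw [← neg_sub (4 * (k : ℝ) ^ 2) ((1 + 2 * (n : ℝ)) ^ 2)]
    generalize (1 + 2 * (n : ℝ)) ^ 2 = x at *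
    generalize 4 * (k : ℝ) ^ 2 = K at *
    generalize l ^ 2 = m at *
    field_simp
    ring
  · rw [show (l ^ 2 - 4 * (k : ℝ) ^ 2) ^ 2 = (4 * (k : ℝ) ^ 2 - l ^ 2) ^ 2 by ring]
    generalize Real.tan (π * l / 2) = t at *
    generalize (1 / Real.cos (π * l / 2)) ^ 2 = s at *
    generalize 4 * (k : ℝ) ^ 2 = K at *
    field_simp
    ring
end

section
/- For every γ > 0, every λ₀ ∈ (0, π/(2γ)), and every y ∈ [−γ, γ], the two series below converge and satisfy ∑_{n=0}^∞ (2·(−1)^n·ω_n·cos(λ₀γ)/(γ·(ω_n² − λ₀²)²))·cos(ω_n·y) − ∑_{n=1}^∞ (2·(−1)^{n+1}·ω̄_n²·sin(λ₀γ)/(λ₀·γ·(ω̄_n² − λ₀²)²))·cos(ω̄_n·y) = C(λ₀)·cos(λ₀·y). In particular, the left-hand side, divided by cos(λ₀·y), is independent of y. -/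
open Real Set

lemma aux_int (γ l μ A : ℝ) (hl : l ≠ 0) (hD : μ^2 - l^2 ≠ 0) :
    ∫ y in (-γ)..γ, Complex.exp (-(Complex.I * μ * y)) *
      ((-(y * Real.sin (l*y)) / (2*l) + A * Real.cos (l*y) : ℝ) : ℂ) =
    ((-1/(2*l) * (-((4*l/(μ^2-l^2)^2) * (μ * Real.cos (l*γ) * Real.sin (μ*γ) - l * Real.sin (l*γ) * Real.cos (μ*γ))
      + (2/(μ^2-l^2)) * (-(γ*μ*Real.sin (l*γ) * Real.sin (μ*γ)) - Real.sin (l*γ)*Real.cos (μ*γ) - l*γ*Real.cos (l*γ)*Real.cos (μ*γ))))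
      + A * ((2/(μ^2-l^2)) * (μ * Real.cos (l*γ) * Real.sin (μ*γ) - l * Real.sin (l*γ) * Real.cos (μ*γ))) : ℝ) : ℂ) := by
  have hl' : (l:ℂ) ≠ 0 := by exact_mod_cast hl
  have hD' : (μ:ℂ)^2 - (l:ℂ)^2 ≠ 0 := by exact_mod_cast hD
  have hI : Complex.I ^ 2 = -1 := Complex.I_sq
  let S : ℝ → ℂ := fun y => ((Real.sin (l*y) : ℝ) : ℂ)
  let K : ℝ → ℂ := fun y => ((Real.cos (l*y) : ℝ) : ℂ)
  let E : ℝ → ℂ := fun y => Complex.exp (-(Complex.I * μ * y))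
  have hS : ∀ y, HasDerivAt S (l * K y) y := by
    intro y
    have h : HasDerivAt (fun y => Real.sin (l*y)) (l * Real.cos (l*y)) y := by
      simpa [mul_comm] using ((hasDerivAt_id y).const_mul l).sin
    simpa [S, K] using h.ofReal_comp
  have hK : ∀ y, HasDerivAt K (-(l * S y)) y := by
    intro y
    have h : HasDerivAt (fun y => Real.cos (l*y)) (-(l * Real.sin (l*y))) y := by
      simpa [mul_comm] using ((hasDerivAt_id y).const_mul l).cos
    simpa [S, K] using h.ofReal_comp
  have hid : ∀ y : ℝ, HasDerivAt (fun y : ℝ => (y:ℂ)) 1 y := fun y => by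
    simpa using (hasDerivAt_id y).ofReal_comp
  have hE : ∀ y, HasDerivAt E (-(Complex.I * μ) * E y) y := by
    intro y
    have := HasDerivAt.cexp (f := fun y : ℝ => -(Complex.I * μ * y)) (((hid y).const_mul (Complex.I * μ)).neg)
    refine this.congr_deriv ?_
    simp [E]; ring
  let D : ℂ := (μ:ℂ)^2 - (l:ℂ)^2
  let Pc : ℝ → ℂ := fun y => E y * (-l * S y + Complex.I * μ * K y) / D
  let Ps : ℝ → ℂ := fun y => E y * (Complex.I * μ * S y + l * K y) / D
  have hPc : ∀ y, HasDerivAt Pc (E y * K y) y := by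
    intro y
    have := ((hE y).mul (((hS y).const_mul (-l : ℂ)).add ((hK y).const_mul (Complex.I * μ)))).div_const D
    refine this.congr_deriv ?_
    simp only [D, Pi.add_apply]
    field_simp
    ring_nf
    simp only [hI]; ring
  have hPs : ∀ y, HasDerivAt Ps (E y * S y) y := by
    intro y
    have := ((hE y).mul (((hS y).const_mul (Complex.I * μ)).add ((hK y).const_mul (l:ℂ)))).div_const D
    refine this.congr_deriv ?_
    simp only [D, Pi.add_apply]
    field_simp
    ring_nf
    simp only [hI]; ring
  let Q : ℝ → ℂ := fun y => -1/(2*l) * (y * Ps y - (Complex.I * μ * Ps y + l * Pc y)/D) + A * Pc y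
  have hQ : ∀ y : ℝ, HasDerivAt Q (E y * ((-(y * Real.sin (l*y)) / (2*l) + A * Real.cos (l*y) : ℝ) : ℂ)) y := by
    intro y
    have := ((((hid y).mul (hPs y)).sub ((((hPs y).const_mul (Complex.I * μ)).add ((hPc y).const_mul (l:ℂ))).div_const D)).const_mul (-1/(2*l) : ℂ)).add ((hPc y).const_mul (A:ℂ))
    refine this.congr_deriv ?_
    push_cast
    simp only [Ps, D, S, K]
    push_cast
    field_simp
    ring
  rw [intervalIntegral.integral_eq_sub_of_hasDerivAt (fun y _ => hQ y)]
  · have e1 : E γ = Real.cos (μ*γ) - Complex.I * Real.sin (μ*γ) := by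
      simp only [E]
      rw [show -(Complex.I * μ * γ) = ((-(μ*γ) : ℝ):ℂ) * Complex.I by push_cast; ring, Complex.exp_mul_I]
      rw [← Complex.ofReal_cos, ← Complex.ofReal_sin]; simp; ring
    have e2 : E (-γ) = Real.cos (μ*γ) + Complex.I * Real.sin (μ*γ) := by
      simp only [E]
      rw [show -(Complex.I * μ * (-γ : ℝ)) = ((μ*γ : ℝ):ℂ) * Complex.I by push_cast; ring, Complex.exp_mul_I]
      rw [← Complex.ofReal_cos, ← Complex.ofReal_sin]; ring
    have s2 : S (-γ) = - S γ := by simp [S]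
    have k2 : K (-γ) = K γ := by simp [K]
    simp only [Q, Pc, Ps, e1, e2, s2, k2]
    simp only [S, K, D]
    generalize Real.cos (μ*γ) = a
    generalize Real.sin (μ*γ) = b
    generalize Real.cos (l*γ) = c
    generalize Real.sin (l*γ) = d
    push_cast
    field_simp
    ring_nf
    simp only [hI, show Complex.I^3 = -Complex.I by rw [pow_succ, hI]; ring, show Complex.I^4 = 1 by rw [show 4 = 2*2 by rfl, pow_mul, hI]; ring]
    ring
  · apply Continuous.intervalIntegrable
    fun_prop

lemma aux_sum (γ l A κ : ℝ) (hγ : 0 < γ) (hl : l ≠ 0) (c : ℤ → ℝ) (hc : Summable c)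
    (μ : ℤ → ℝ) (hμ : ∀ n, μ n = (n:ℝ) * π / γ + κ)
    (hD : ∀ n, μ n^2 - l^2 ≠ 0)
    (hper : Real.sin (κ * γ) = 0 ∨ -(γ * Real.sin (l*γ)) / (2*l) + A * Real.cos (l*γ) = 0)
    (hcf : ∀ n, 2 * γ * c n = -1/(2*l) * (-((4*l/(μ n^2-l^2)^2) * (μ n * Real.cos (l*γ) * Real.sin (μ n*γ) - l * Real.sin (l*γ) * Real.cos (μ n*γ))
      + (2/(μ n^2-l^2)) * (-(γ*μ n*Real.sin (l*γ) * Real.sin (μ n*γ)) - Real.sin (l*γ)*Real.cos (μ n*γ) - l*γ*Real.cos (l*γ)*Real.cos (μ n*γ))))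
      + A * ((2/(μ n^2-l^2)) * (μ n * Real.cos (l*γ) * Real.sin (μ n*γ) - l * Real.sin (l*γ) * Real.cos (μ n*γ))))
    (y : ℝ) (hy : y ∈ Ico (-γ) γ) :
    HasSum (fun n : ℤ => c n * Real.cos (μ n * y)) (-(y * Real.sin (l*y)) / (2*l) + A * Real.cos (l*y)) := by
  have : Fact (0 < 2 * γ) := ⟨by linarith⟩
  have hγ' : (γ:ℂ) ≠ 0 := by exact_mod_cast hγ.ne'
  let h : ℝ → ℝ := fun y => -(y * Real.sin (l*y)) / (2*l) + A * Real.cos (l*y)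
  let g : ℝ → ℂ := fun y => Complex.exp (-(Complex.I * κ * y)) * (h y : ℂ)
  have hg : Continuous g := by simp only [g, h]; fun_prop
  have hgp : g (-γ) = g (-γ + 2*γ) := by
    have hh : h (-γ) = h γ := by simp [h]
    rw [show -γ + 2*γ = γ by ring]
    simp only [g, hh]
    rcases hper with h0 | h0
    · congr 1
      rw [show -(Complex.I * κ * γ) = ((-(κ*γ) : ℝ):ℂ) * Complex.I by push_cast; ring, Complex.exp_mul_I]
      rw [show -(Complex.I * κ * (-γ : ℝ)) = ((κ*γ : ℝ):ℂ) * Complex.I by push_cast; ring, Complex.exp_mul_I]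
      rw [← Complex.ofReal_cos, ← Complex.ofReal_sin, ← Complex.ofReal_cos, ← Complex.ofReal_sin]
      simp [h0]
    · have : h γ = 0 := h0
      simp [this]
  let f : C(AddCircle (2*γ), ℂ) := ⟨AddCircle.liftIco (2*γ) (-γ) g, AddCircle.liftIco_continuous hgp hg.continuousOn⟩
  have hfc : ∀ n, fourierCoeff f n = (c n : ℂ) := by
    intro n
    change fourierCoeff (AddCircle.liftIco (2*γ) (-γ) g) n = _
    rw [fourierCoeff_liftIco_eq, fourierCoeffOn_eq_integral]
    have e := aux_int γ l (μ n) A hl (hD n)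
    rw [← hcf n] at e
    have : ∫ x in (-γ)..(-γ+2*γ), fourier (-n) (x : AddCircle (-γ + 2*γ - -γ)) • g x = ((2*γ*c n : ℝ) : ℂ) := by
      rw [← e, show -γ + 2*γ = γ by ring]
      congr 1
      ext x
      rw [fourier_coe_apply, smul_eq_mul, ← mul_assoc, ← Complex.exp_add]
      congr 2
      rw [hμ]
      push_cast
      field_simp
      ring
    rw [this, show -γ + 2*γ - -γ = 2*γ by ring, Complex.real_smul]
    push_cast
    field_simp
  have hs : Summable (fourierCoeff f) := by
    rw [funext hfc]; exact Complex.ofRealCLM.summable hc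
  have key := has_pointwise_sum_fourier_series_of_summable hs (y : AddCircle (2*γ))
  have hfy : f y = g y := by
    change AddCircle.liftIco (2*γ) (-γ) g y = g y
    exact AddCircle.liftIco_coe_apply (by rw [show -γ + 2*γ = γ by ring]; exact hy)
  rw [hfy] at key
  have key2 := key.mul_left (Complex.exp (Complex.I * κ * y))
  have e1 : Complex.exp (Complex.I * κ * y) * g y = (h y : ℂ) := by
    simp only [g]; rw [← mul_assoc, ← Complex.exp_add]; simp
  rw [e1] at key2
  have key3 := Complex.reCLM.hasSum key2
  rw [Complex.reCLM_apply, Complex.ofReal_re] at key3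
  refine key3.congr_fun fun n => ?_
  simp only [hfc, fourier_coe_apply, smul_eq_mul, Complex.reCLM_apply]
  rw [mul_left_comm, ← Complex.exp_add, show Complex.I * κ * y + 2 * π * Complex.I * n * y / ((2*γ : ℝ):ℂ) = ((μ n * y : ℝ):ℂ) * Complex.I by rw [hμ]; push_cast; field_simp; ring,
    Complex.re_ofReal_mul, Complex.exp_ofReal_mul_I_re]

lemma aux_summable (a γ l δ M : ℝ) (hγ : 0 < γ) (hl : 0 < l) (hlδ : l < δ) (c μ : ℤ → ℝ)
    (hμ : ∀ n, μ n = ((n:ℝ) + a) * π / γ) (h1 : ∀ n, δ ≤ |μ n| ∨ c n = 0)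
    (h2 : ∀ n, |c n| * (μ n ^2 - l^2)^2 ≤ M * μ n ^2) : Summable c := by
  have hs : Summable (fun n : ℤ => 1 / (μ n)^2) := by
    have := ((Real.summable_one_div_int_add_rpow a 2).2 (by norm_num)).mul_left ((γ/π)^2)
    refine this.congr fun n => ?_
    rw [hμ]
    norm_num
    rw [div_pow, div_pow, mul_pow, inv_div, mul_comm, ← div_eq_inv_mul, div_div, mul_comm (π^2)]
  have hδ : 0 < δ := hl.trans hlδ
  set k : ℝ := 1 - l^2/δ^2 with hk
  have hk0 : 0 < k := by
    rw [hk, sub_pos, div_lt_one (by positivity)]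
    gcongr
  refine Summable.of_norm_bounded (hs.mul_left (|M|/k^2)) fun n => ?_
  rcases h1 n with h | h
  · have hm : δ^2 ≤ μ n ^2 := by rw [← sq_abs (μ n)]; gcongr
    have hmp : 0 < μ n ^2 := lt_of_lt_of_le (by positivity) hm
    have hD : k * μ n^2 ≤ μ n^2 - l^2 := by
      have : l^2/δ^2 * μ n^2 ≥ l^2 := by
        rw [ge_iff_le, div_mul_eq_mul_div, le_div_iff₀ (by positivity)]
        gcongr
      rw [hk]; linarith
    have hD2 : (k * μ n^2)^2 ≤ (μ n^2 - l^2)^2 := by gcongr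
    have h3 : |c n| * (k * μ n^2)^2 ≤ M * μ n^2 := (mul_le_mul_of_nonneg_left hD2 (abs_nonneg _)).trans (h2 n)
    have h4 : M * μ n^2 ≤ |M| * μ n^2 := by gcongr; exact le_abs_self M
    rw [Real.norm_eq_abs, div_mul_div_comm, mul_one, le_div_iff₀ (by positivity)]
    have : (|c n| * (k^2 * μ n^2)) * μ n^2 ≤ |M| * μ n^2 := by nlinarith
    exact le_of_mul_le_mul_right this hmp
  · rw [h]; simp; positivity

lemma aux_F (γ l : ℝ) (hγ : 0 < γ) (hl : l ∈ Ioo 0 (π / (2 * γ))) (hc : 0 < Real.cos (l*γ))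
    (y : ℝ) (hy : y ∈ Ico (-γ) γ) :
    HasSum (fun n : ℕ => 2 * (-1 : ℝ) ^ n * (((n:ℝ)+1/2)*π/γ) * Real.cos (l * γ) / (γ * ((((n:ℝ)+1/2)*π/γ) ^ 2 - l ^ 2) ^ 2)
            * Real.cos ((((n:ℝ)+1/2)*π/γ) * y))
      (-(y * Real.sin (l*y)) / (2*l) + γ * Real.sin (l*γ) / (2*l*Real.cos (l*γ)) * Real.cos (l*y)) := by
  obtain ⟨hl0, hl1⟩ := hl
  have hpi := Real.pi_pos
  let μ : ℤ → ℝ := fun n => ((n:ℝ)+1/2)*π/γ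
  have hμ : ∀ n, μ n = ((n:ℝ)+1/2)*π/γ := fun n => rfl
  have hμδ : ∀ n, π/(2*γ) ≤ |μ n| := by
    intro n
    have : (1/2:ℝ) ≤ |(n:ℝ)+1/2| := by
      rcases le_or_gt 0 n with h | h
      · have : (0:ℝ) ≤ n := by exact_mod_cast h
        rw [abs_of_nonneg (by linarith)]; linarith
      · have : (n:ℝ) ≤ -1 := by exact_mod_cast (by omega : n ≤ -1)
        rw [abs_of_neg (by linarith)]; linarith
    rw [hμ, abs_div, abs_mul, abs_of_pos hpi, abs_of_pos hγ]
    calc π/(2*γ) = 1/2*π/γ := by field_simp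
      _ ≤ _ := by gcongr
  have hD : ∀ n, 0 < μ n^2 - l^2 := by
    intro n
    have : l < |μ n| := hl1.trans_le (hμδ n)
    rw [← sq_abs (μ n), sub_pos]; gcongr
  have hcos : ∀ n, Real.cos (μ n * γ) = 0 := by
    intro n
    rw [hμ, show ((n:ℝ)+1/2)*π/γ*γ = n*π+π/2 by field_simp, Real.cos_add_pi_div_two, Real.sin_int_mul_pi, neg_zero]
  let c : ℤ → ℝ := fun n => μ n * Real.sin (μ n * γ) * Real.cos (l*γ) / (γ * (μ n^2 - l^2)^2)
  have hcs : Summable c := by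
    refine aux_summable (1/2) γ l (π/(2*γ)) (1/(γ*(π/(2*γ)))) hγ hl0 hl1 c μ hμ (fun n => Or.inl (hμδ n)) fun n => ?_
    have hD' := hD n
    simp only [c]
    rw [abs_div, abs_mul, abs_mul, abs_of_pos (show 0 < γ * (μ n^2-l^2)^2 by positivity), div_mul_eq_mul_div, mul_div_mul_right _ _ (by positivity)]
    have h1 := Real.abs_sin_le_one (μ n * γ)
    have h2 := Real.abs_cos_le_one (l * γ)
    have hd := hμδ n
    calc |μ n| * |Real.sin (μ n * γ)| * |Real.cos (l*γ)| / γ ≤ |μ n| * 1 * 1 / γ := by gcongr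
      _ = 1/(γ*(π/(2*γ))) * (|μ n| * (π/(2*γ))) := by field_simp
      _ ≤ 1/(γ*(π/(2*γ))) * (|μ n| * |μ n|) := by gcongr
      _ = _ := by rw [← sq, sq_abs]
  have key := aux_sum γ l (γ * Real.sin (l*γ) / (2*l*Real.cos (l*γ))) (π/(2*γ)) hγ hl0.ne' c hcs μ
    (fun n => by rw [hμ]; field_simp) (fun n => (hD n).ne') (Or.inr (by
      generalize Real.cos (l*γ) = p at hc ⊢
      field_simp; ring))
    (fun n => by
      have hD' := (hD n).ne'
      rw [hcos]; simp only [c]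
      generalize Real.cos (l*γ) = p at hc ⊢
      generalize Real.sin (l*γ) = q
      field_simp; ring) y hy
  have key2 := key.nat_add_neg_add_one
  refine key2.congr_fun fun n => ?_
  have e1 : μ (-((n:ℤ)+1)) = - μ n := by simp only [μ]; push_cast; ring
  have e2 : Real.sin (μ n * γ) = (-1)^n := by
    rw [hμ, Int.cast_natCast, show ((n:ℝ)+1/2)*π/γ*γ = n*π+π/2 by field_simp, Real.sin_add_pi_div_two, Real.cos_nat_mul_pi]
  have e3 : ((n:ℝ)+1/2)*π/γ = μ n := by rw [hμ, Int.cast_natCast]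
  simp only [c, e1, neg_mul, Real.sin_neg, Real.cos_neg, e2, e3, neg_sq]
  ring

lemma aux_G (γ l : ℝ) (hγ : 0 < γ) (hl : l ∈ Ioo 0 (π / (2 * γ))) (hc : 0 < Real.sin (l*γ))
    (y : ℝ) (hy : y ∈ Ico (-γ) γ) :
    HasSum (fun n : ℕ => 2 * (-1 : ℝ) ^ (n + 1 + 1) * (((n+1:ℕ):ℝ)*π/γ) ^ 2 * Real.sin (l * γ)
              / (l * γ * ((((n+1:ℕ):ℝ)*π/γ) ^ 2 - l ^ 2) ^ 2)
            * Real.cos ((((n+1:ℕ):ℝ)*π/γ) * y))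
      (-(y * Real.sin (l*y)) / (2*l) + 1/2*(1/l^2 - γ * Real.cos (l*γ) / (l*Real.sin (l*γ))) * Real.cos (l*y)) := by
  obtain ⟨hl0, hl1⟩ := hl
  have hpi := Real.pi_pos
  let μ : ℤ → ℝ := fun n => ((n:ℝ)+0)*π/γ
  have hμ : ∀ n, μ n = ((n:ℝ)+0)*π/γ := fun n => rfl
  have hμδ : ∀ n ≠ 0, π/(2*γ) ≤ |μ n| := by
    intro n hn
    have : (1/2:ℝ) ≤ |(n:ℝ)+0| := by
      have h : (1:ℤ) ≤ |n| := Int.one_le_abs hn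
      have h : (1:ℝ) ≤ |(n:ℝ)| := by exact_mod_cast h
      rw [add_zero]; linarith
    rw [hμ, abs_div, abs_mul, abs_of_pos hpi, abs_of_pos hγ]
    calc π/(2*γ) = 1/2*π/γ := by field_simp
      _ ≤ _ := by gcongr
  have hμ0 : μ 0 = 0 := by simp [μ]
  have hD : ∀ n, μ n^2 - l^2 ≠ 0 := by
    intro n
    by_cases hn : n = 0
    · rw [hn, hμ0]; simp [hl0.ne']
    have : l < |μ n| := hl1.trans_le (hμδ n hn)
    apply ne_of_gt
    rw [← sq_abs (μ n), sub_pos]; gcongr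
  have hsin : ∀ n, Real.sin (μ n * γ) = 0 := by
    intro n
    rw [hμ, show ((n:ℝ)+0)*π/γ*γ = n*π by field_simp; ring, Real.sin_int_mul_pi]
  let c : ℤ → ℝ := fun n => -(μ n^2 * Real.cos (μ n * γ) * Real.sin (l*γ)) / (l * γ * (μ n^2 - l^2)^2)
  have hc0 : c 0 = 0 := by simp [c, hμ0]
  have hcs : Summable c := by
    refine aux_summable 0 γ l (π/(2*γ)) (1/(l*γ)) hγ hl0 hl1 c μ hμ (fun n => ?_) fun n => ?_
    · by_cases hn : n = 0
      · right; rw [hn, hc0]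
      · exact Or.inl (hμδ n hn)
    have hD' := hD n
    simp only [c]
    rw [abs_div, abs_neg, abs_mul, abs_mul, abs_of_pos (show 0 < l * γ * (μ n^2-l^2)^2 by positivity), div_mul_eq_mul_div, mul_div_mul_right _ _ (by positivity)]
    have h1 := Real.abs_cos_le_one (μ n * γ)
    have h2 := Real.abs_sin_le_one (l * γ)
    calc |μ n^2| * |Real.cos (μ n * γ)| * |Real.sin (l*γ)| / (l*γ) ≤ |μ n^2| * 1 * 1 / (l*γ) := by gcongr
      _ = _ := by rw [abs_of_nonneg (sq_nonneg _)]; ring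
  have key := aux_sum γ l (1/2*(1/l^2 - γ * Real.cos (l*γ) / (l*Real.sin (l*γ)))) 0 hγ hl0.ne' c hcs μ
    (fun n => by rw [hμ]; ring) hD (Or.inl (by simp))
    (fun n => by
      have hD' := hD n
      rw [hsin]; simp only [c]
      generalize Real.sin (l*γ) = p at hc ⊢
      generalize Real.cos (l*γ) = q
      field_simp; ring) y hy
  have key2 := key.nat_add_neg
  rw [hc0, zero_mul, add_zero, ← hasSum_nat_add_iff' 1] at key2
  simp only [Finset.sum_range_one, Nat.cast_zero, neg_zero, hc0, zero_mul, add_zero, sub_zero] at key2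
  refine key2.congr_fun fun n => ?_
  have e1 : μ (-((n+1:ℕ):ℤ)) = - μ (n+1:ℕ) := by simp only [μ]; push_cast; ring
  have e2 : Real.cos (μ (n+1:ℕ) * γ) = (-1)^(n+1) := by
    rw [hμ, Int.cast_natCast, show (((n+1:ℕ):ℝ)+0)*π/γ*γ = (n+1:ℕ)*π by field_simp; ring, Real.cos_nat_mul_pi]
  have e3 : ((n+1:ℕ):ℝ)*π/γ = μ (n+1:ℕ) := by rw [hμ, Int.cast_natCast, add_zero]
  simp only [c, e1, neg_mul, Real.cos_neg, e2, e3, neg_sq]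
  ring

/-- For `γ > 0`, `λ₀ ∈ (0, π/(2γ))` and `y ∈ [−γ, γ]`, with
`ω_n = (n + 1/2)·π/γ`, `ω̄_n = n·π/γ` and
`C(λ₀) = (1/2)·(γ/(λ₀·sin(λ₀γ)·cos(λ₀γ)) − 1/λ₀²)`, the two series
`∑_{n=0}^∞ (2·(−1)^n·ω_n·cos(λ₀γ)/(γ·(ω_n² − λ₀²)²))·cos(ω_n·y)` and
`∑_{n=1}^∞ (2·(−1)^{n+1}·ω̄_n²·sin(λ₀γ)/(λ₀·γ·(ω̄_n² − λ₀²)²))·cos(ω̄_n·y)`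
converge, and their difference equals `C(λ₀)·cos(λ₀·y)`. -/
theorem stmt_8 (γ : ℝ) (hγ : 0 < γ) (l : ℝ) (hl : l ∈ Ioo 0 (π / (2 * γ)))
    (y : ℝ) (hy : y ∈ Icc (-γ) γ)
    (ω ωb : ℕ → ℝ)
    (hω : ∀ n : ℕ, ω n = ((n : ℝ) + 1/2) * π / γ)
    (hωb : ∀ n : ℕ, ωb n = (n : ℝ) * π / γ)
    (C : ℝ)
    (hC : C = (1/2) * (γ / (l * Real.sin (l * γ) * Real.cos (l * γ)) - 1 / l ^ 2)) :
    ∃ S₁ S₂ : ℝ,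
      HasSum (fun n : ℕ =>
          2 * (-1 : ℝ) ^ n * ω n * Real.cos (l * γ) / (γ * (ω n ^ 2 - l ^ 2) ^ 2)
            * Real.cos (ω n * y)) S₁ ∧
      HasSum (fun n : ℕ =>
          2 * (-1 : ℝ) ^ (n + 1 + 1) * ωb (n + 1) ^ 2 * Real.sin (l * γ)
              / (l * γ * (ωb (n + 1) ^ 2 - l ^ 2) ^ 2)
            * Real.cos (ωb (n + 1) * y)) S₂ ∧
      S₁ - S₂ = C * Real.cos (l * y) := by
  have hl' := hl
  obtain ⟨hl0, hl1⟩ := hl'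
  have hlt : l * γ < π / 2 := by
    rw [lt_div_iff₀ (by positivity)] at hl1; linarith
  have hlp : 0 < l * γ := by positivity
  have hcp : 0 < Real.cos (l*γ) := Real.cos_pos_of_mem_Ioo ⟨by linarith, hlt⟩
  have hsp : 0 < Real.sin (l*γ) := Real.sin_pos_of_pos_of_lt_pi hlp (by linarith)
  obtain rfl : ω = fun n : ℕ => ((n : ℝ) + 1/2) * π / γ := funext hω
  obtain rfl : ωb = fun n : ℕ => (n : ℝ) * π / γ := funext hωb
  have hsc := Real.sin_sq_add_cos_sq (l*γ)
  refine ⟨-(y * Real.sin (l*y)) / (2*l) + γ * Real.sin (l*γ) / (2*l*Real.cos (l*γ)) * Real.cos (l*y),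
    -(y * Real.sin (l*y)) / (2*l) + 1/2*(1/l^2 - γ * Real.cos (l*γ) / (l*Real.sin (l*γ))) * Real.cos (l*y), ?_, ?_, ?_⟩
  · rcases hy.2.lt_or_eq with h | h
    · exact aux_F γ l hγ hl hcp y ⟨hy.1, h⟩
    · have := aux_F γ l hγ hl hcp (-y) ⟨by linarith, by linarith⟩
      simpa only [mul_neg, Real.cos_neg, Real.sin_neg, neg_mul, neg_neg] using this
  · rcases hy.2.lt_or_eq with h | h
    · exact aux_G γ l hγ hl hsp y ⟨hy.1, h⟩
    · have := aux_G γ l hγ hl hsp (-y) ⟨by linarith, by linarith⟩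
      simpa only [mul_neg, Real.cos_neg, Real.sin_neg, neg_mul, neg_neg] using this
  · rw [hC]
    generalize Real.sin (l*γ) = s at *
    generalize Real.cos (l*γ) = c at *
    have : γ / (l * s * c) = γ * (s^2+c^2) / (l*s*c) := by rw [hsc, mul_one]
    rw [this]
    field_simp
    ring
end

section
/- For every γ > 0 and every λ₀ ∈ (0, π/(2γ)), the series ∑_{n=0}^∞ 32·γ²·cos(λ₀γ)/(π⁴·((1+2n)² − (2λ₀γ/π)²)²) converges and equals C(λ₀)·sin(λ₀γ)/(λ₀·γ). -/
open Real Set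

lemma hs_congr {f g : ℕ → ℝ} {a b : ℝ} (h : HasSum f a) (hf : ∀ n, g n = f n) (hb : b = a) :
    HasSum g b := by
  rw [hb, funext hf]
  exact h

lemma cot_hs (x : ℝ) (h0 : 0 < x) (h1 : x < 1) :
    HasSum (fun n : ℕ => 2 * x / (x ^ 2 - ((n : ℝ) + 1) ^ 2))
      (π * (Real.cos (π * x) / Real.sin (π * x)) - 1 / x) := by
  have hz : (x : ℂ) ∈ Complex.integerComplement := by
    rintro ⟨k, hk⟩
    have hk' : (k : ℝ) = x := by exact_mod_cast hk
    rw [← hk'] at h0 h1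
    have a : 0 < k := by exact_mod_cast h0
    have b : k < 1 := by exact_mod_cast h1
    omega
  have h := (summable_cotTerm hz).hasSum
  have e : ∑' n, cotTerm (x : ℂ) n = π * Complex.cot (π * x) - 1 / x := by
    rw [cot_series_rep' hz]
  rw [e] at h
  rw [← Complex.hasSum_ofReal]
  convert h using 1
  · funext n
    have hn : (0 : ℝ) ≤ n := Nat.cast_nonneg n
    have a1 : x - ((n : ℝ) + 1) ≠ 0 := by linarith
    have a2 : x + ((n : ℝ) + 1) ≠ 0 := by linarith
    have : 2 * x / (x ^ 2 - ((n : ℝ) + 1) ^ 2) = 1 / (x - (n + 1)) + 1 / (x + (n + 1)) := by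
      rw [show x ^ 2 - ((n : ℝ) + 1) ^ 2 = (x - (n + 1)) * (x + (n + 1)) by ring]
      field_simp
      ring
    rw [this]
    simp [cotTerm]
  · simp [Complex.cot]

set_option maxHeartbeats 2000000 in
lemma tan_hs (x : ℝ) (h0 : 0 < x) (h1 : x < 1) :
    HasSum (fun n : ℕ => 1 / ((1 + 2 * (n : ℝ)) ^ 2 - x ^ 2))
      (π / 4 * (Real.tan (π / 2 * x) / x)) := by
  have hA := cot_hs x h0 h1
  have hB := (cot_hs (x / 2) (by linarith) (by linarith)).mul_left (1 / 2)
  have hO := (hA.summable.comp_injective (i := fun k : ℕ => 2 * k)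
    (fun a b h => by simpa using h)).hasSum
  have hB' : HasSum (fun k : ℕ => 2 * x / (x ^ 2 - (((2 * k + 1 : ℕ) : ℝ) + 1) ^ 2))
      (1 / 2 * (π * (Real.cos (π * (x / 2)) / Real.sin (π * (x / 2))) - 1 / (x / 2))) := by
    refine hs_congr hB (fun n => ?_) rfl
    have hn : (0 : ℝ) ≤ n := Nat.cast_nonneg n
    push_cast
    have a1 : x ^ 2 - (2 * (n : ℝ) + 1 + 1) ^ 2 ≠ 0 := by nlinarith
    have a2 : (x / 2) ^ 2 - ((n : ℝ) + 1) ^ 2 ≠ 0 := by nlinarith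
    rw [← mul_div_assoc, div_eq_div_iff a1 a2]
    ring
  have hu := (HasSum.even_add_odd hO hB').unique hA
  set S := ∑' b, ((fun n : ℕ => 2 * x / (x ^ 2 - ((n : ℝ) + 1) ^ 2)) ∘ fun k : ℕ => 2 * k) b
  have hF := hO.mul_left (-1 / (2 * x))
  refine hs_congr hF (fun n => ?_) ?_
  · have hn : (0 : ℝ) ≤ n := Nat.cast_nonneg n
    have a1 : x ^ 2 - (2 * (n : ℝ) + 1) ^ 2 ≠ 0 := by nlinarith
    have a2 : (1 + 2 * (n : ℝ)) ^ 2 - x ^ 2 ≠ 0 := by nlinarith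
    simp only [Function.comp]
    push_cast
    field_simp
    ring
  · have hs : Real.sin (π * x / 2) ≠ 0 :=
      (Real.sin_pos_of_pos_of_lt_pi (by positivity) (by nlinarith [Real.pi_pos])).ne'
    have hc : Real.cos (π * x / 2) ≠ 0 :=
      (Real.cos_pos_of_mem_Ioo ⟨by nlinarith [Real.pi_pos], by nlinarith [Real.pi_pos]⟩).ne'
    have hS : S = (π * (Real.cos (π * x) / Real.sin (π * x)) - 1 / x) -
      (1 / 2 * (π * (Real.cos (π * (x / 2)) / Real.sin (π * (x / 2))) - 1 / (x / 2))) := by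
      linarith
    rw [hS, show π * x = 2 * (π * x / 2) by ring, show π * (x / 2) = π * x / 2 by ring,
      show π / 2 * x = π * x / 2 by ring, Real.sin_two_mul, Real.cos_two_mul, Real.tan_eq_sin_div_cos]
    have hsc := Real.sin_sq_add_cos_sq (π * x / 2)
    generalize Real.sin (π * x / 2) = s at *
    generalize Real.cos (π * x / 2) = c at *
    field_simp
    linear_combination (4 * π * x) * hsc

lemma sq_hs (x : ℝ) (h0 : 0 < x) (h1 : x < 1) :
    HasSum (fun n : ℕ => 2 * x / ((1 + 2 * (n : ℝ)) ^ 2 - x ^ 2) ^ 2)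
      (π / 4 * ((1 / Real.cos (π / 2 * x) ^ 2 * (π / 2) * x - Real.tan (π / 2 * x)) / x ^ 2)) := by
  obtain ⟨r, hxr, hr1⟩ := exists_between h1
  have hr : 0 < 1 - r ^ 2 := by nlinarith
  have hsum : Summable (fun n : ℕ => 2 / (1 - r ^ 2) ^ 2 * (1 / ((2 * n + 1 : ℕ) : ℝ) ^ 4)) := by
    apply Summable.mul_left
    exact (Real.summable_one_div_nat_pow.mpr (by norm_num : 1 < 4)).comp_injective
      (i := fun n : ℕ => 2 * n + 1) (fun a b h => by simpa using h)
  have key : ∀ (n : ℕ) (y : ℝ), y ∈ Ioo 0 r →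
      (1 - r ^ 2) * (1 + 2 * (n : ℝ)) ^ 2 ≤ (1 + 2 * (n : ℝ)) ^ 2 - y ^ 2 := by
    intro n y hy
    have hn : (0 : ℝ) ≤ n := Nat.cast_nonneg n
    have : y ^ 2 ≤ r ^ 2 := pow_le_pow_left₀ hy.1.le hy.2.le 2
    nlinarith [mul_nonneg (sq_nonneg r) hn, mul_nonneg (sq_nonneg r) (mul_nonneg hn hn)]
  have kpos : ∀ (n : ℕ) (y : ℝ), y ∈ Ioo 0 r → 0 < (1 + 2 * (n : ℝ)) ^ 2 - y ^ 2 := by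
    intro n y hy
    exact lt_of_lt_of_le (by positivity) (key n y hy)
  have hbd : ∀ (n : ℕ) (y : ℝ), y ∈ Ioo 0 r →
      ‖2 * y / ((1 + 2 * (n : ℝ)) ^ 2 - y ^ 2) ^ 2‖ ≤
        2 / (1 - r ^ 2) ^ 2 * (1 / ((2 * n + 1 : ℕ) : ℝ) ^ 4) := by
    intro n y hy
    have hy0 := hy.1
    have hp := kpos n y hy
    rw [Real.norm_of_nonneg (by positivity), div_mul_div_comm]
    have : (1 - r ^ 2) ^ 2 * ((2 * n + 1 : ℕ) : ℝ) ^ 4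
        = ((1 - r ^ 2) * (1 + 2 * (n : ℝ)) ^ 2) ^ 2 := by push_cast; ring
    rw [this]
    apply div_le_div₀ (by norm_num) (by linarith [hy.2]) (by positivity)
    exact pow_le_pow_left₀ (by positivity) (key n y hy) 2
  have hx : x ∈ Ioo 0 r := ⟨h0, hxr⟩
  have hd := hasDerivAt_tsum_of_isPreconnected hsum isOpen_Ioo isPreconnected_Ioo
    (g := fun (n : ℕ) (y : ℝ) => 1 / ((1 + 2 * (n : ℝ)) ^ 2 - y ^ 2))
    (g' := fun (n : ℕ) (y : ℝ) => 2 * y / ((1 + 2 * (n : ℝ)) ^ 2 - y ^ 2) ^ 2)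
    (fun n y hy => by
      have := (((hasDerivAt_id y).pow 2).const_sub ((1 + 2 * (n : ℝ)) ^ 2)).inv (kpos n y hy).ne'
      simpa [Pi.inv_def] using this) hbd hx (tan_hs x h0 h1).summable hx
  have hc : Real.cos (π / 2 * x) ≠ 0 :=
      (Real.cos_pos_of_mem_Ioo ⟨by nlinarith [Real.pi_pos], by nlinarith [Real.pi_pos]⟩).ne'
  have hd2 : HasDerivAt (fun y : ℝ => π / 4 * (Real.tan (π / 2 * y) / y))
      (π / 4 * ((1 / Real.cos (π / 2 * x) ^ 2 * (π / 2) * x - Real.tan (π / 2 * x)) / x ^ 2)) x := by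
    have a : HasDerivAt (fun y : ℝ => π / 2 * y) (π / 2) x := by
      simpa using (hasDerivAt_id x).const_mul (π / 2)
    have b : HasDerivAt (fun y : ℝ => Real.tan (π / 2 * y))
      (1 / Real.cos (π / 2 * x) ^ 2 * (π / 2)) x := (Real.hasDerivAt_tan hc).comp x a
    have := (b.div (hasDerivAt_id x) h0.ne').const_mul (π / 4)
    simpa using this
  have hee : (fun y : ℝ => ∑' n : ℕ, 1 / ((1 + 2 * (n : ℝ)) ^ 2 - y ^ 2)) =ᶠ[nhds x]
      (fun y : ℝ => π / 4 * (Real.tan (π / 2 * y) / y)) := by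
    filter_upwards [Ioo_mem_nhds h0 h1] with y hy
    exact (tan_hs y hy.1 hy.2).tsum_eq
  have he := hd.unique (hd2.congr_of_eventuallyEq hee)
  rw [← he]
  exact (Summable.of_norm_bounded hsum (fun n => hbd n x hx)).hasSum

/-- For every `γ > 0` and `λ₀ ∈ (0, π/(2γ))`, with
`C(λ₀) = (1/2)·(γ/(λ₀·sin(λ₀γ)·cos(λ₀γ)) − 1/λ₀²)`, the series
`∑_{n=0}^∞ 32·γ²·cos(λ₀γ)/(π⁴·((1+2n)² − (2λ₀γ/π)²)²)` converges and
equals `C(λ₀)·sin(λ₀γ)/(λ₀·γ)`. -/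
theorem stmt_9 (γ : ℝ) (hγ : 0 < γ) (l : ℝ) (hl : l ∈ Ioo 0 (π / (2 * γ)))
    (C : ℝ)
    (hC : C = (1/2) * (γ / (l * Real.sin (l * γ) * Real.cos (l * γ)) - 1 / l ^ 2)) :
    HasSum
      (fun n : ℕ =>
        32 * γ ^ 2 * Real.cos (l * γ) /
          (π ^ 4 * ((1 + 2 * (n : ℝ)) ^ 2 - (2 * l * γ / π) ^ 2) ^ 2))
      (C * Real.sin (l * γ) / (l * γ)) := by
  obtain ⟨hl0, hl1⟩ := hl
  have hp := Real.pi_pos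
  have ht : l * γ < π / 2 := by
    rw [lt_div_iff₀ (by positivity)] at hl1
    linarith
  have ht0 : 0 < l * γ := by positivity
  have hc : Real.cos (l * γ) ≠ 0 := (Real.cos_pos_of_mem_Ioo ⟨by linarith, ht⟩).ne'
  have hs : Real.sin (l * γ) ≠ 0 := (Real.sin_pos_of_pos_of_lt_pi ht0 (by linarith)).ne'
  have h := (sq_hs (2 * l * γ / π) (by positivity)
    (by rw [div_lt_one hp]; linarith)).mul_left
      (32 * γ ^ 2 * Real.cos (l * γ) / π ^ 4 / (2 * (2 * l * γ / π)))
  refine hs_congr h (fun n => ?_) ?_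
  · generalize ((1 + 2 * (n : ℝ)) ^ 2 - (2 * l * γ / π) ^ 2) ^ 2 = D
    rcases eq_or_ne D 0 with rfl | hD
    · simp
    · field_simp
  · rw [show π / 2 * (2 * l * γ / π) = l * γ by field_simp, Real.tan_eq_sin_div_cos, hC]
    generalize Real.sin (l * γ) = s at *
    generalize Real.cos (l * γ) = c at *
    field_simp
    ring
end
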